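/- Let G be a finite simple 2-regular graph that is a disjoint union of m cycles of lengths r₁, …, r_m (each r_i ≥ 3), let n = r₁ + ⋯ + r_m, let A be a set of n agents partitioned into two types of sizes n₁ ≥ 1 and n₂ ≥ 1 with n₁ + n₂ = n, and let τ ∈ (1/2, 1). If no subset S ⊆ {1, …, m} satisfies ∑_{i∈S} r_i = n₁, then the minimum placement cost over all bijective placements p : A → V(G) is at least 3 and at most 4; moreover, if some subset S ⊆ {1, …, m} satisfies ∑_{i∈S} r_i = n₁ + 1, then this minimum equals 3. -/

import Mathlib

open Finset
open scoped Classical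

noncomputable section

namespace Schelling

variable {V A : Type*} [Fintype V] [Fintype A] {k : ℕ}

/-- The set of neighbors of agent `a` under placement `p`. -/
def nbrs (G : SimpleGraph V) (p : A → V) (a : A) : Finset A :=
  Finset.univ.filter fun b => G.Adj (p a) (p b)

/-- `|N⁺_p(a)|`: the number of neighbors of `a` under `p` having the same type as `a`. -/
def posCount (G : SimpleGraph V) (t : A → Fin k) (p : A → V) (a : A) : ℕ :=
  (Finset.univ.filter fun b => G.Adj (p a) (p b) ∧ t b = t a).card

/-- One-versus-all `|N⁻_p(a)|`: the number of neighbors of `a` whose type differs from `t a`. -/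
def negCountAll (G : SimpleGraph V) (t : A → Fin k) (p : A → V) (a : A) : ℕ :=
  (Finset.univ.filter fun b => G.Adj (p a) (p b) ∧ t b ≠ t a).card

/-- One-versus-one `|N⁻_p(a)|`: the size of a largest set of neighbors of `a`
of one common type different from `t a`. -/
def negCountOne (G : SimpleGraph V) (t : A → Fin k) (p : A → V) (a : A) : ℕ :=
  (Finset.univ.filter fun T : Fin k => T ≠ t a).sup fun T =>
    (Finset.univ.filter fun b => G.Adj (p a) (p b) ∧ t b = T).card

/-- The cost of agent `a` in the one-versus-all version. -/
def costAll (G : SimpleGraph V) (t : A → Fin k) (τ : ℝ) (p : A → V) (a : A) : ℝ :=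
  if nbrs G p a = ∅ then τ
  else max 0 (τ - (posCount G t p a : ℝ) /
    ((posCount G t p a : ℝ) + (negCountAll G t p a : ℝ)))

/-- The cost of agent `a` in the one-versus-one version. -/
def costOne (G : SimpleGraph V) (t : A → Fin k) (τ : ℝ) (p : A → V) (a : A) : ℝ :=
  if nbrs G p a = ∅ then τ
  else max 0 (τ - (posCount G t p a : ℝ) /
    ((posCount G t p a : ℝ) + (negCountOne G t p a : ℝ)))

/-- A swap of the (distinct) agents `a` and `b` turning placement `p` into `q`,
which strictly decreases the cost of both agents (cost function `c`). -/
def SwapMove (c : (A → V) → A → ℝ) (p q : A → V) (a b : A) : Prop :=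
  a ≠ b ∧ q = p ∘ (Equiv.swap a b) ∧ c q a < c p a ∧ c q b < c p b

/-- `q` is obtained from `p` by an improving swap. -/
def ImprovingSwap (c : (A → V) → A → ℝ) (p q : A → V) : Prop :=
  ∃ a b, SwapMove c p q a b

/-- A placement is swap-stable if it admits no improving swap. -/
def SwapStable (c : (A → V) → A → ℝ) (p : A → V) : Prop :=
  ∀ q, ¬ ImprovingSwap c p q

/-- Some finite sequence of improving swaps starting at `p₀` ends in a swap-stable placement. -/
def ReachesStableSwap (c : (A → V) → A → ℝ) (p₀ : A → V) : Prop :=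
  ∃ (n : ℕ) (q : ℕ → A → V), q 0 = p₀ ∧
    (∀ i < n, ImprovingSwap c (q i) (q (i + 1))) ∧ SwapStable c (q n)

/-- A jump of agent `a` to the node `v` (unoccupied under `p`) turning placement `p`
into `q`, which strictly decreases the cost of `a` (cost function `c`). -/
def JumpMove (c : (A → V) → A → ℝ) (p q : A → V) (a : A) (v : V) : Prop :=
  (∀ b, p b ≠ v) ∧ q = Function.update p a v ∧ c q a < c p a

/-- `q` is obtained from `p` by an improving jump. -/
def ImprovingJump (c : (A → V) → A → ℝ) (p q : A → V) : Prop :=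
  ∃ a v, JumpMove c p q a v

/-- A placement is jump-stable if it admits no improving jump. -/
def JumpStable (c : (A → V) → A → ℝ) (p : A → V) : Prop :=
  ∀ q, ¬ ImprovingJump c p q

/-- Some finite sequence of improving jumps starting at `p₀` ends in a jump-stable placement. -/
def ReachesStableJump (c : (A → V) → A → ℝ) (p₀ : A → V) : Prop :=
  ∃ (n : ℕ) (q : ℕ → A → V), q 0 = p₀ ∧
    (∀ i < n, ImprovingJump c (q i) (q (i + 1))) ∧ JumpStable c (q n)

/-- The placement cost: the number of discontent agents (one-versus-all cost). -/
def placementCost (G : SimpleGraph V) (t : A → Fin k) (τ : ℝ) (p : A → V) : ℕ :=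
  (Finset.univ.filter fun a => costAll G t τ p a ≠ 0).card

/-- A graph is `Δ`-regular if every node has exactly `Δ` neighbors. -/
def IsRegular (G : SimpleGraph V) (Δ : ℕ) : Prop :=
  ∀ v : V, (Finset.univ.filter fun u => G.Adj v u).card = Δ

/-!
Let `X` be the set of nodes occupied by the first type. On a `2`-regular graph with
`1/2 < τ ≤ 1` an agent is discontent exactly when one of its two neighbors has the other type, so
the placement cost is the number of endpoints of edges between `X` and `Xᶜ`.

Lower bound: since `X` is not a union of cycles, the cut has an edge, and since all degrees are
even, the number of cut edges is even, hence at least `2`. If the cut edges have `a` endpoints in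
`X` and `b` outside, then `2 ≤ a * b`, which forces `3 ≤ a + b`.

Upper bounds: filling up cycle by cycle, always continuing along a cut edge, never creates more
than `2` cut edges, so at most `4` endpoints. If instead `X` is a union of cycles with one vertex
`v` removed, all endpoints lie among `v` and its two neighbors.
-/

lemma card_interedges_insert_left (G : SimpleGraph V) {v : V} {X : Finset V} (hv : v ∉ X)
    (Y : Finset V) :
    #(G.interedges (insert v X) Y) = #(G.neighborFinset v ∩ Y) + #(G.interedges X Y) := by
  have hunion : G.interedges (insert v X) Y =
      (G.neighborFinset v ∩ Y).image (v, ·) ∪ G.interedges X Y := by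
    ext ⟨x, y⟩
    simp only [mem_union, mem_image, mem_inter, SimpleGraph.mem_neighborFinset, Prod.mk.injEq,
      SimpleGraph.mk_mem_interedges_iff, mem_insert]
    grind
  have hdisj : Disjoint ((G.neighborFinset v ∩ Y).image (v, ·)) (G.interedges X Y) := by
    simp only [disjoint_left, mem_image, SimpleGraph.mem_interedges_iff]
    grind
  rw [hunion, card_union_of_disjoint hdisj, card_image_of_injective _ (Prod.mk_right_injective v)]

omit [Fintype V] in
lemma card_interedges_comm (G : SimpleGraph V) (X Y : Finset V) :
    #(G.interedges X Y) = #(G.interedges Y X) :=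
  have := G.symm
  Rel.card_interedges_comm X Y

lemma card_interedges_insert_compl (G : SimpleGraph V) {v : V} {X : Finset V} (hv : v ∉ X) :
    #(G.interedges (insert v X) (insert v X)ᶜ) + 2 * #(G.neighborFinset v ∩ X) =
      #(G.interedges X Xᶜ) + G.degree v := by
  have hcompl : Xᶜ = insert v (insert v X)ᶜ := by
    rw [compl_insert, insert_erase (mem_compl.2 hv)]
  have hnbrs : G.neighborFinset v \ X = G.neighborFinset v ∩ (insert v X)ᶜ := by
    ext w
    simp only [mem_sdiff, mem_inter, mem_compl, mem_insert, SimpleGraph.mem_neighborFinset]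
    grind [SimpleGraph.Adj.ne]
  have hdeg : #(G.neighborFinset v ∩ X) + #(G.neighborFinset v ∩ (insert v X)ᶜ) = G.degree v := by
    rw [← hnbrs, card_inter_add_card_sdiff, SimpleGraph.card_neighborFinset_eq_degree]
  have hnew := card_interedges_insert_left G hv (insert v X)ᶜ
  have hold : #(G.interedges X Xᶜ) =
      #(G.neighborFinset v ∩ X) + #(G.interedges X (insert v X)ᶜ) := by
    rw [hcompl, card_interedges_comm, card_interedges_insert_left G (by simp),
      card_interedges_comm]
  lia

lemma even_card_interedges_compl (G : SimpleGraph V) (hG : ∀ v, Even (G.degree v))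
    (X : Finset V) : Even #(G.interedges X Xᶜ) := by
  induction X using Finset.induction_on with
  | empty => simp
  | insert v X hv ih =>
    have hinsert := card_interedges_insert_compl G hv
    have hdeg := hG v
    grind

lemma exists_card_eq_card_interedges_compl_le_two (G : SimpleGraph V)
    (hG : ∀ v, G.degree v ≤ 2) {j : ℕ} (hj : j ≤ Fintype.card V) :
    ∃ X : Finset V, #X = j ∧ #(G.interedges X Xᶜ) ≤ 2 := by
  induction j with
  | zero => exact ⟨∅, by simp⟩
  | succ j ih =>
    obtain ⟨X, hX, hcut⟩ := ih (by lia)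
    -- The far end of a cut edge has a neighbor in `X`, so moving it into `X` adds no more cut
    -- edges than it removes.
    obtain ⟨v, hv, hle⟩ : ∃ v ∉ X, #(G.interedges X Xᶜ) ≤ 2 * #(G.neighborFinset v ∩ X) := by
      rcases (G.interedges X Xᶜ).eq_empty_or_nonempty with hempty | ⟨⟨x, v⟩, hxv⟩
      · obtain ⟨v, hv⟩ : ∃ v, v ∉ X := by
          by_contra! hall
          rw [eq_univ_iff_forall.2 hall, card_univ] at hX
          lia
        exact ⟨v, hv, by simp [hempty]⟩
      · obtain ⟨hx, hv, hadj⟩ := G.mk_mem_interedges_iff.1 hxv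
        have hpos : 0 < #(G.neighborFinset v ∩ X) :=
          card_pos.2 ⟨x, by simp [hx, hadj.symm]⟩
        exact ⟨v, mem_compl.1 hv, by lia⟩
    refine ⟨insert v X, by rw [card_insert_of_notMem hv, hX], ?_⟩
    have hinsert := card_interedges_insert_compl G hv
    have hdeg := hG v
    lia

/-- The boundary of the cut `(X, Xᶜ)`: the endpoints, on either side, of its edges. When one of two
types occupies exactly `X`, these are the positions of the agents with a neighbor of the other
type. -/
def cutBoundary (G : SimpleGraph V) (X : Finset V) : Finset V :=
  (G.interedges X Xᶜ).image Prod.fst ∪ (G.interedges X Xᶜ).image Prod.snd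

lemma mem_cutBoundary {G : SimpleGraph V} {X : Finset V} {v : V} :
    v ∈ cutBoundary G X ↔ ∃ w, G.Adj v w ∧ (w ∈ X ↔ v ∉ X) := by
  simp only [cutBoundary, mem_union, mem_image, SimpleGraph.mem_interedges_iff, Prod.exists,
    mem_compl]
  grind [SimpleGraph.Adj.symm]

lemma card_cutBoundary_le (G : SimpleGraph V) (X : Finset V) :
    #(cutBoundary G X) ≤ 2 * #(G.interedges X Xᶜ) := by
  rw [two_mul]
  exact (card_union_le _ _).trans (add_le_add card_image_le card_image_le)

lemma cutBoundary_eq_empty_iff {G : SimpleGraph V} {X : Finset V} :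
    cutBoundary G X = ∅ ↔ ∀ v w, G.Adj v w → (v ∈ X ↔ w ∈ X) := by
  simp only [eq_empty_iff_forall_notMem, mem_cutBoundary]
  grind

lemma three_le_card_cutBoundary (G : SimpleGraph V) (hG : ∀ v, Even (G.degree v))
    {X : Finset V} (hX : (cutBoundary G X).Nonempty) : 3 ≤ #(cutBoundary G X) := by
  set E := G.interedges X Xᶜ
  have hfst : E.image Prod.fst ⊆ X :=
    image_subset_iff.2 fun e he => (G.mem_interedges_iff.1 he).1
  have hsnd : E.image Prod.snd ⊆ Xᶜ :=
    image_subset_iff.2 fun e he => (G.mem_interedges_iff.1 he).2.1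
  have hcard : #(cutBoundary G X) = #(E.image Prod.fst) + #(E.image Prod.snd) :=
    card_union_of_disjoint (Disjoint.mono hfst hsnd disjoint_compl_right)
  have hmul : #E ≤ #(E.image Prod.fst) * #(E.image Prod.snd) :=
    (card_le_card subset_product).trans (card_product _ _).le
  have htwo : 2 ≤ #E := by
    have heven : Even #E := even_card_interedges_compl G hG X
    have hpos : 0 < #E := by
      have hle := card_cutBoundary_le G X
      have hB := hX.card_pos
      lia
    grind
  rw [hcard]
  have hamgm := four_mul_le_sq_add #(E.image Prod.fst) #(E.image Prod.snd)
  nlinarith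

lemma cutBoundary_erase_subset (G : SimpleGraph V) (X : Finset V) (v : V) :
    cutBoundary G (X.erase v) ⊆ cutBoundary G X ∪ insert v (G.neighborFinset v) := by
  intro x hx
  obtain ⟨w, hxw, hw⟩ := mem_cutBoundary.1 hx
  simp only [mem_union, mem_insert, SimpleGraph.mem_neighborFinset, mem_cutBoundary]
  grind [SimpleGraph.Adj.symm]

lemma card_cutBoundary_erase_le (G : SimpleGraph V) (X : Finset V) (v : V) :
    #(cutBoundary G (X.erase v)) ≤ #(cutBoundary G X) + (G.degree v + 1) :=
  calc #(cutBoundary G (X.erase v))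
      ≤ #(cutBoundary G X) + #(insert v (G.neighborFinset v)) :=
        (card_le_card (cutBoundary_erase_subset G X v)).trans (card_union_le _ _)
    _ ≤ #(cutBoundary G X) + (G.degree v + 1) := by
        grw [card_insert_le, SimpleGraph.card_neighborFinset_eq_degree]

lemma cutBoundary_eq_empty_iff_exists_components {G : SimpleGraph V} {X : Finset V} :
    cutBoundary G X = ∅ ↔
      ∃ C : Finset G.ConnectedComponent, X = univ.filter (G.connectedComponentMk · ∈ C) := by
  rw [cutBoundary_eq_empty_iff]
  constructor
  · intro hadj
    have hreach : ∀ v w, G.Reachable v w → (v ∈ X ↔ w ∈ X) := by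
      rintro v w ⟨walk⟩
      induction walk with
      | nil => rfl
      | cons h _ ih => exact (hadj _ _ h).trans ih
    refine ⟨X.image G.connectedComponentMk, ?_⟩
    ext v
    simp only [mem_filter_univ, mem_image, SimpleGraph.ConnectedComponent.eq]
    exact ⟨fun hv => ⟨v, hv, .rfl⟩, fun ⟨w, hw, hwv⟩ => (hreach w v hwv).1 hw⟩
  · rintro ⟨C, rfl⟩ v w hvw
    simp only [mem_filter_univ,
      SimpleGraph.ConnectedComponent.connectedComponentMk_eq_of_adj hvw]

lemma exists_sum_eq_iff_exists_cutBoundary_eq_empty {ι : Type*} {G : SimpleGraph V}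
    {r : ι → ℕ} (comp : G.ConnectedComponent ≃ ι)
    (hsize : ∀ i, #{v | G.connectedComponentMk v = comp.symm i} = r i) {j : ℕ} :
    (∃ S : Finset ι, ∑ i ∈ S, r i = j) ↔ ∃ X : Finset V, cutBoundary G X = ∅ ∧ #X = j := by
  have hcard (C : Finset G.ConnectedComponent) :
      #{v | G.connectedComponentMk v ∈ C} = ∑ i ∈ C.map comp.toEmbedding, r i := by
    rw [← sum_card_fiberwise_eq_card_filter, sum_map]
    simp [← hsize]
  constructor
  · rintro ⟨S, rfl⟩
    refine ⟨_, cutBoundary_eq_empty_iff_exists_components.2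
      ⟨S.map comp.symm.toEmbedding, rfl⟩, ?_⟩
    rw [hcard, map_map]
    simp
  · rintro ⟨X, hX, rfl⟩
    obtain ⟨C, rfl⟩ := cutBoundary_eq_empty_iff_exists_components.1 hX
    exact ⟨_, (hcard C).symm⟩

lemma IsRegular.isRegularOfDegree {G : SimpleGraph V} {Δ : ℕ} (hG : IsRegular G Δ) :
    G.IsRegularOfDegree Δ := by
  intro v
  rw [← SimpleGraph.card_neighborFinset_eq_degree, SimpleGraph.neighborFinset_eq_filter]
  exact hG v

omit [Fintype V] in
lemma posCount_add_negCountAll (G : SimpleGraph V) (t : A → Fin k) (p : A → V) (a : A) :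
    posCount G t p a + negCountAll G t p a = #(nbrs G p a) := by
  rw [← card_filter_add_card_filter_not (s := nbrs G p a) (fun b => t b = t a)]
  simp only [nbrs, filter_filter, posCount, negCountAll]

omit [Fintype V] in
-- `hτ` is `1 - 1 / #(nbrs G p a) < τ`: a single neighbor of another type is already too many.
lemma costAll_ne_zero_iff {G : SimpleGraph V} {t : A → Fin k} {τ : ℝ} {p : A → V} {a : A}
    (hnbrs : (nbrs G p a).Nonempty) (hτ : (#(nbrs G p a) : ℝ) - 1 < τ * #(nbrs G p a))
    (hτ1 : τ ≤ 1) : costAll G t τ p a ≠ 0 ↔ ∃ b, G.Adj (p a) (p b) ∧ t b ≠ t a := by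
  have hsum : (posCount G t p a : ℝ) + negCountAll G t p a = #(nbrs G p a) :=
    mod_cast posCount_add_negCountAll G t p a
  have hpos : (0 : ℝ) < #(nbrs G p a) := mod_cast hnbrs.card_pos
  have hcost : costAll G t τ p a ≠ 0 ↔ (posCount G t p a : ℝ) < τ * #(nbrs G p a) := by
    rw [costAll, if_neg hnbrs.ne_empty, hsum, ne_eq, max_eq_left_iff, not_le, sub_pos,
      div_lt_iff₀ hpos]
  have hneg : (∃ b, G.Adj (p a) (p b) ∧ t b ≠ t a) ↔ 1 ≤ negCountAll G t p a := by
    rw [negCountAll, Nat.one_le_iff_ne_zero, card_ne_zero, filter_nonempty_iff]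
    simp
  rw [hcost, hneg]
  constructor
  · intro hlt
    by_contra! hlt_one
    have hzero : (negCountAll G t p a : ℝ) = 0 := mod_cast Nat.lt_one_iff.1 hlt_one
    have hle : τ * #(nbrs G p a) ≤ #(nbrs G p a) := mul_le_of_le_one_left hpos.le hτ1
    linarith
  · intro hone
    have hone_real : (1 : ℝ) ≤ negCountAll G t p a := mod_cast hone
    linarith

lemma card_nbrs_of_bijective (G : SimpleGraph V) {p : A → V} (hp : p.Bijective) (a : A) :
    #(nbrs G p a) = G.degree (p a) := by
  rw [← SimpleGraph.card_neighborFinset_eq_degree]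
  refine card_bijective p hp fun b => ?_
  simp [nbrs]

lemma placementCost_eq_card_cutBoundary {G : SimpleGraph V} {Δ : ℕ} (hG : G.IsRegularOfDegree Δ)
    (hΔ : 0 < Δ) (t : A → Fin 2) {τ : ℝ} (hτ : (Δ : ℝ) - 1 < τ * Δ) (hτ1 : τ ≤ 1) {p : A → V}
    (hp : p.Bijective) :
    placementCost G t τ p = #(cutBoundary G (image p {a | t a = 0})) := by
  have hcard (a : A) : #(nbrs G p a) = Δ := by
    rw [card_nbrs_of_bijective G hp, hG.degree_eq]
  have hmem (a : A) : p a ∈ image p {a | t a = 0} ↔ t a = 0 := by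
    simp [hp.injective.eq_iff]
  refine card_bijective p hp fun a => ?_
  have hnbrs : (nbrs G p a).Nonempty := card_pos.1 (by rwa [hcard])
  rw [mem_filter_univ, costAll_ne_zero_iff hnbrs (by rwa [hcard]) hτ1, mem_cutBoundary,
    hp.surjective.exists]
  simp only [hmem]
  grind

lemma exists_bijective_image_eq {s : Finset A} {X : Finset V} (hcard : #s = #X)
    (hAV : Fintype.card A = Fintype.card V) : ∃ p : A → V, p.Bijective ∧ s.image p = X := by
  let e : A ≃ V := Fintype.equivOfCardEq hAV
  obtain ⟨σ, hσ⟩ := Equiv.Perm.exists_map_finset_eq (s.map e.toEmbedding) X (by simpa)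
  refine ⟨e.trans σ, (e.trans σ).bijective, ?_⟩
  rw [← hσ, map_map, map_eq_image]
  rfl

/-- On a `2`-regular graph that is a disjoint union of `m` cycles of lengths
`r 0, …, r (m-1)` (each at least `3`), with two agent types of sizes `n₁, n₂ ≥ 1`,
`n₁ + n₂ = n = |V|` agents and `τ ∈ (1/2, 1)`: if no subset of the cycle lengths sums to
`n₁`, then the minimum placement cost over bijective placements is at least `3` and at
most `4`; if moreover some subset sums to `n₁ + 1`, the minimum equals `3`. -/
theorem statement14 {V A : Type*} [Fintype V] [Fintype A]
    (G : SimpleGraph V) (hreg : IsRegular G 2)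
    (m : ℕ) (r : Fin m → ℕ) (hr : ∀ i, 3 ≤ r i)
    (comp : G.ConnectedComponent ≃ Fin m)
    (hsize : ∀ i,
      (Finset.univ.filter fun v => G.connectedComponentMk v = comp.symm i).card = r i)
    (n n₁ n₂ : ℕ) (hn : n = ∑ i, r i) (hV : Fintype.card V = n)
    (hA : Fintype.card A = n)
    (t : A → Fin 2)
    (h1 : (Finset.univ.filter fun a => t a = 0).card = n₁)
    (h2 : (Finset.univ.filter fun a => t a = 1).card = n₂)
    (hn1 : 1 ≤ n₁) (hn2 : 1 ≤ n₂) (hsum : n₁ + n₂ = n)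
    (τ : ℝ) (hτ : 1 / 2 < τ) (hτ1 : τ < 1)
    (hno : ¬ ∃ S : Finset (Fin m), ∑ i ∈ S, r i = n₁) :
    (∀ p : A → V, Function.Bijective p → 3 ≤ placementCost G t τ p) ∧
    (∃ p : A → V, Function.Bijective p ∧ placementCost G t τ p ≤ 4) ∧
    ((∃ S : Finset (Fin m), ∑ i ∈ S, r i = n₁ + 1) →
      ∃ p : A → V, Function.Bijective p ∧ placementCost G t τ p = 3) := by
  have hG := hreg.isRegularOfDegree
  have hcost {p : A → V} (hp : p.Bijective) :=
    placementCost_eq_card_cutBoundary hG two_pos t (by norm_num; linarith) hτ1.le hp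
  have hexists {X : Finset V} (hX : #X = n₁) :
      ∃ p : A → V, p.Bijective ∧ placementCost G t τ p = #(cutBoundary G X) := by
    obtain ⟨p, hp, rfl⟩ := exists_bijective_image_eq (h1.trans hX.symm) (hA.trans hV.symm)
    exact ⟨p, hp, hcost hp⟩
  have hsums (j : ℕ) := exists_sum_eq_iff_exists_cutBoundary_eq_empty comp hsize (j := j)
  have hlower (p : A → V) (hp : p.Bijective) : 3 ≤ placementCost G t τ p := by
    rw [hcost hp]
    refine three_le_card_cutBoundary G (fun v => hG v ▸ even_two) (nonempty_iff_ne_empty.2 ?_)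
    exact fun hempty => hno <| (hsums n₁).2
      ⟨_, hempty, (card_image_of_injective _ hp.injective).trans h1⟩
  refine ⟨hlower, ?_, fun hS => ?_⟩
  · obtain ⟨X, hX, hcut⟩ := exists_card_eq_card_interedges_compl_le_two G (fun v => (hG v).le)
      (show n₁ ≤ Fintype.card V by lia)
    obtain ⟨p, hp, hpX⟩ := hexists hX
    exact ⟨p, hp, by grind [card_cutBoundary_le G X]⟩
  · obtain ⟨X, hempty, hX⟩ := (hsums (n₁ + 1)).1 hS
    obtain ⟨v, hv⟩ : X.Nonempty := card_pos.1 (by lia)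
    obtain ⟨p, hp, hpX⟩ := hexists (X := X.erase v) (by rw [card_erase_of_mem hv]; lia)
    refine ⟨p, hp, (hlower p hp).antisymm' ?_⟩
    simpa [hpX, hempty, hG v] using card_cutBoundary_erase_le G X v

end Schelling
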